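/- Let F be a (possibly unbalanced) double-well potential and let c > 0. Then: (i) for every α ∈ [0,1) and K ∈ ℝ there is no C³ solution u : ℝ² → ℝ of Δu + c ∂u/∂y = F'(u) with |u| ≤ 1 and ∂u/∂y > 0 everywhere such that lim_{y→+∞} u(x,y) = 1 and lim_{y→−∞} u(x,y) = g_α(x − K) for every x; (ii) if moreover F(1) > 0, then for every K ∈ ℝ there is no such solution with lim_{y→+∞} u(x,y) = 1 and lim_{y→−∞} u(x,y) = g_*(x − K) for every x. -/

import Mathlib

open Real Filter MeasureTheory Metric

noncomputable def pdx (u : ℝ → ℝ → ℝ) (x y : ℝ) : ℝ := deriv (fun t => u t y) x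

noncomputable def pdy (u : ℝ → ℝ → ℝ) (x y : ℝ) : ℝ := deriv (fun t => u x t) y

noncomputable def pdxx (u : ℝ → ℝ → ℝ) (x y : ℝ) : ℝ := deriv (fun t => pdx u t y) x

noncomputable def pdyy (u : ℝ → ℝ → ℝ) (x y : ℝ) : ℝ := deriv (fun t => pdy u x t) y

/-- `F` is a (possibly unbalanced) double-well potential. -/
def DoubleWell (F : ℝ → ℝ) : Prop :=
  ContDiff ℝ 3 F ∧ deriv F (-1) = 0 ∧ deriv F 1 = 0 ∧
  0 < deriv (deriv F) (-1) ∧ 0 < deriv (deriv F) 1 ∧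
  (∀ s ∈ Set.Ioo (-1 : ℝ) 0, 0 < deriv F s) ∧
  (∀ s ∈ Set.Ioo (0 : ℝ) 1, deriv F s < 0) ∧
  F (-1) = 0

/-- `u` is a `C³` solution of `Δu + c uᵧ = F'(u)` on `ℝ²` with `|u| ≤ 1`
which is monotone in `y`. -/
def IsSolution (F : ℝ → ℝ) (c : ℝ) (u : ℝ → ℝ → ℝ) : Prop :=
  ContDiff ℝ 3 (fun p : ℝ × ℝ => u p.1 p.2) ∧
  (∀ x y : ℝ, pdxx u x y + pdyy u x y + c * pdy u x y = deriv F (u x y)) ∧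
  (∀ x y : ℝ, |u x y| ≤ 1) ∧
  (∀ x y : ℝ, 0 < pdy u x y)

/-- A monotone traveling wave solution connecting `-1` to `1`. -/
def IsTravelingWave (F : ℝ → ℝ) (c : ℝ) (u : ℝ → ℝ → ℝ) : Prop :=
  IsSolution F c u ∧
  (∀ x : ℝ, Tendsto (fun y => u x y) atTop (nhds 1)) ∧
  (∀ x : ℝ, Tendsto (fun y => u x y) atBot (nhds (-1)))

/-!
The stress tensor of a solution gives the identity
`∂ₓ(uₓ uᵧ) + ∂ᵧ((uᵧ² - uₓ²) / 2 - F(u)) = -c uᵧ²`. Integrated over `[a, b] × ℝ`, its right-hand side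
has a sign, the lateral fluxes are at most `sup |uₓ|` times the total rise of `u` along the sides
(here monotonicity in `y` enters), and the fluxes through the ends `y = ±∞` are read off the limit
profiles. If `u` rises from `g` to a critical point `m` of `F`, this gives
`∫ₐᵇ (F(g) - F(m) + g'² / 2) ≤ k ((m - g(a)) + (m - g(b)))`.

Since `F(g) - g'² / 2` is constant, a value of it above `F(m)` would make the left-hand side grow
linearly in `b - a`, which is excluded because the right-hand side is bounded; `g_α` has the value
`F(α) > F(1)`. If instead `g → m` at both ends, the constant is `F(m)`, the integrand is `g'²`, and
the right-hand side tends to zero as `a → -∞`, `b → +∞`, so `g` is constant; `g_*` is not.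

Only pointwise limits of `u` are given, so the limits of `uₓ` and `uᵧ` come from interior gradient
estimates for `u - g`, proved by comparing the odd part of a function with a quadratic barrier.
-/

open Set Topology

/-! ### The maximum principle -/

section SecondPartials

/-- `wx`, `wy`, `wxx`, `wyy` are the first and unmixed second partial derivatives of the continuous
function `w` on the plane. Naming the derivatives lets estimates for `Δ + d ∂ᵧ` be stated without
`deriv` and without continuity of the second derivatives. -/
structure HasSecondPartials (w wx wy wxx wyy : ℝ → ℝ → ℝ) : Prop where
  continuous : Continuous fun p : ℝ × ℝ => w p.1 p.2
  dx : ∀ x y, HasDerivAt (fun t => w t y) (wx x y) x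
  dy : ∀ x y, HasDerivAt (fun t => w x t) (wy x y) y
  dxx : ∀ x y, HasDerivAt (fun t => wx t y) (wxx x y) x
  dyy : ∀ x y, HasDerivAt (fun t => wy x t) (wyy x y) y

variable {w wx wy wxx wyy z zx zy zxx zyy : ℝ → ℝ → ℝ}

lemma hasSecondPartials_fst {h h' h'' : ℝ → ℝ} (hh : ∀ x, HasDerivAt h (h' x) x)
    (hh' : ∀ x, HasDerivAt h' (h'' x) x) :
    HasSecondPartials (fun x _ => h x) (fun x _ => h' x) (fun _ _ => 0) (fun x _ => h'' x)
      (fun _ _ => 0) where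
  continuous := (continuous_iff_continuousAt.2 fun x => (hh x).continuousAt).comp continuous_fst
  dx x _ := hh x
  dy x y := hasDerivAt_const y (h x)
  dxx x _ := hh' x
  dyy _ y := hasDerivAt_const y 0

namespace HasSecondPartials

lemma add (hw : HasSecondPartials w wx wy wxx wyy) (hz : HasSecondPartials z zx zy zxx zyy) :
    HasSecondPartials (fun x y => w x y + z x y) (fun x y => wx x y + zx x y)
      (fun x y => wy x y + zy x y) (fun x y => wxx x y + zxx x y)
      (fun x y => wyy x y + zyy x y) where
  continuous := hw.continuous.add hz.continuous
  dx x y := (hw.dx x y).add (hz.dx x y)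
  dy x y := (hw.dy x y).add (hz.dy x y)
  dxx x y := (hw.dxx x y).add (hz.dxx x y)
  dyy x y := (hw.dyy x y).add (hz.dyy x y)

lemma const_mul (hw : HasSecondPartials w wx wy wxx wyy) (r : ℝ) :
    HasSecondPartials (fun x y => r * w x y) (fun x y => r * wx x y) (fun x y => r * wy x y)
      (fun x y => r * wxx x y) (fun x y => r * wyy x y) where
  continuous := hw.continuous.const_mul r
  dx x y := (hw.dx x y).const_mul r
  dy x y := (hw.dy x y).const_mul r
  dxx x y := (hw.dxx x y).const_mul r
  dyy x y := (hw.dyy x y).const_mul r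

lemma sub (hw : HasSecondPartials w wx wy wxx wyy) (hz : HasSecondPartials z zx zy zxx zyy) :
    HasSecondPartials (fun x y => w x y - z x y) (fun x y => wx x y - zx x y)
      (fun x y => wy x y - zy x y) (fun x y => wxx x y - zxx x y)
      (fun x y => wyy x y - zyy x y) := by
  simpa only [neg_one_mul, ← sub_eq_add_neg] using hw.add (hz.const_mul (-1))

lemma swap (hw : HasSecondPartials w wx wy wxx wyy) :
    HasSecondPartials (fun x y => w y x) (fun x y => wy y x) (fun x y => wx y x)
      (fun x y => wyy y x) (fun x y => wxx y x) where
  continuous := hw.continuous.comp continuous_swap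
  dx x y := hw.dy y x
  dy x y := hw.dx y x
  dxx x y := hw.dyy y x
  dyy x y := hw.dxx y x

lemma comp_const_add (hw : HasSecondPartials w wx wy wxx wyy) (a b : ℝ) :
    HasSecondPartials (fun x y => w (a + x) (b + y)) (fun x y => wx (a + x) (b + y))
      (fun x y => wy (a + x) (b + y)) (fun x y => wxx (a + x) (b + y))
      (fun x y => wyy (a + x) (b + y)) where
  continuous := hw.continuous.comp
    ((continuous_fst.const_add a).prodMk (continuous_snd.const_add b))
  dx x y := (hw.dx (a + x) (b + y)).comp_const_add a x
  dy x y := (hw.dy (a + x) (b + y)).comp_const_add b y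
  dxx x y := (hw.dxx (a + x) (b + y)).comp_const_add a x
  dyy x y := (hw.dyy (a + x) (b + y)).comp_const_add b y

lemma comp_neg_fst (hw : HasSecondPartials w wx wy wxx wyy) :
    HasSecondPartials (fun x y => w (-x) y) (fun x y => -wx (-x) y) (fun x y => wy (-x) y)
      (fun x y => wxx (-x) y) (fun x y => wyy (-x) y) where
  continuous := hw.continuous.comp (continuous_fst.neg.prodMk continuous_snd)
  dx x y := ((hw.dx (-x) y).comp x (hasDerivAt_neg x)).congr_deriv (mul_neg_one _)
  dy x y := hw.dy (-x) y
  dxx x y := ((hw.dxx (-x) y).comp x (hasDerivAt_neg x)).neg.congr_deriv (by ring)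
  dyy x y := hw.dyy (-x) y

lemma exp_mul (hw : HasSecondPartials w wx wy wxx wyy) (r b : ℝ) :
    HasSecondPartials (fun x y => exp (r * (y - b)) * w x y)
      (fun x y => exp (r * (y - b)) * wx x y)
      (fun x y => exp (r * (y - b)) * (wy x y + r * w x y))
      (fun x y => exp (r * (y - b)) * wxx x y)
      (fun x y => exp (r * (y - b)) * (wyy x y + 2 * r * wy x y + r ^ 2 * w x y)) := by
  have hexp (y : ℝ) : HasDerivAt (fun t => exp (r * (t - b))) (exp (r * (y - b)) * r) y := by
    simpa using (((hasDerivAt_id y).sub_const b).const_mul r).exp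
  refine ⟨?_, fun x y => (hw.dx x y).const_mul _, fun x y => ?_,
    fun x y => (hw.dxx x y).const_mul _, fun x y => ?_⟩
  · exact Continuous.mul (by fun_prop) hw.continuous
  · exact ((hexp y).mul (hw.dy x y)).congr_deriv (by ring)
  · exact ((hexp y).mul ((hw.dyy x y).fun_add ((hw.dy x y).const_mul r))).congr_deriv (by ring)

end HasSecondPartials

lemma second_deriv_nonneg_of_isLocalMin {f f' : ℝ → ℝ} {f'' x : ℝ} (hmin : IsLocalMin f x)
    (hf : ∀ t, HasDerivAt f (f' t) t) (hf' : HasDerivAt f' f'' x) : 0 ≤ f'' := by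
  obtain rfl : f' = deriv f := funext fun t => (hf t).deriv.symm
  by_contra! hneg
  -- a strict local maximum which is also a local minimum is locally constant
  have hmax : IsLocalMax f x :=
    isLocalMax_of_deriv_deriv_neg (hf'.deriv ▸ hneg) hmin.deriv_eq_zero (hf x).continuousAt
  have hconst : f =ᶠ[𝓝 x] fun _ => f x := by
    filter_upwards [hmin, hmax] with t ht ht' using le_antisymm ht' ht
  have : deriv (deriv f) x = 0 := by simp [hconst.deriv.deriv_eq]
  exact hneg.ne (hf'.deriv ▸ this)

namespace HasSecondPartials

lemma nonneg_of_laplacian_neg (hz : HasSecondPartials z zx zy zxx zyy) {K : Set (ℝ × ℝ)}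
    (hK : IsCompact K) (hlap : ∀ p ∈ interior K, zxx p.1 p.2 + zyy p.1 p.2 < 0)
    (hfr : ∀ p ∈ frontier K, 0 ≤ z p.1 p.2) {p : ℝ × ℝ} (hp : p ∈ K) : 0 ≤ z p.1 p.2 := by
  obtain ⟨q, hqK, hmin⟩ := hK.exists_isMinOn ⟨p, hp⟩ hz.continuous.continuousOn
  refine le_trans ?_ (hmin hp)
  by_cases hq : q ∈ interior K
  · have hloc : IsLocalMin (fun p : ℝ × ℝ => z p.1 p.2) q :=
      hmin.isLocalMin (mem_interior_iff_mem_nhds.1 hq)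
    have hxx : 0 ≤ zxx q.1 q.2 := second_deriv_nonneg_of_isLocalMin
      (hloc.comp_continuous (g := fun t => (t, q.2)) (by fun_prop)) (hz.dx · q.2) (hz.dxx _ _)
    have hyy : 0 ≤ zyy q.1 q.2 := second_deriv_nonneg_of_isLocalMin
      (hloc.comp_continuous (g := fun t => (q.1, t)) (by fun_prop)) (hz.dy q.1) (hz.dyy _ _)
    linarith [hlap q hq]
  · exact hfr q ⟨subset_closure hqK, hq⟩

lemma nonneg_of_laplacian_nonpos (hz : HasSecondPartials z zx zy zxx zyy) {K : Set (ℝ × ℝ)}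
    (hK : IsCompact K) (hlap : ∀ p ∈ interior K, zxx p.1 p.2 + zyy p.1 p.2 ≤ 0)
    (hfr : ∀ p ∈ frontier K, 0 ≤ z p.1 p.2) {p : ℝ × ℝ} (hp : p ∈ K) : 0 ≤ z p.1 p.2 := by
  obtain ⟨C, hC⟩ : ∃ C, ∀ q ∈ K, q.1 ^ 2 ≤ C := by
    obtain ⟨C, hC⟩ := hK.bddAbove_image (f := fun q : ℝ × ℝ => q.1 ^ 2) (by fun_prop)
    exact ⟨C, fun q hq => hC (mem_image_of_mem _ hq)⟩
  have hperturb (ε : ℝ) (hε : 0 < ε) : 0 ≤ z p.1 p.2 + ε * (C - p.1 ^ 2) := by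
    have hsq : HasSecondPartials (fun x _ => C - x ^ 2) (fun x _ => -(2 * x)) (fun _ _ => 0)
        (fun _ _ => -2) (fun _ _ => 0) :=
      hasSecondPartials_fst (fun x => by simpa using (hasDerivAt_pow 2 x).const_sub C)
        fun x => by simpa using ((hasDerivAt_id x).const_mul 2).fun_neg
    refine (hz.add (hsq.const_mul ε)).nonneg_of_laplacian_neg hK (fun q hq => ?_)
      (fun q hq => ?_) hp
    · linarith [hlap q hq]
    · have := hC q (hK.isClosed.frontier_subset hq)
      exact add_nonneg (hfr q hq) (mul_nonneg hε.le (by linarith))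
  have hlim : Tendsto (fun ε => z p.1 p.2 + ε * (C - p.1 ^ 2)) (𝓝[>] 0) (𝓝 (z p.1 p.2)) := by
    have : Continuous fun ε => z p.1 p.2 + ε * (C - p.1 ^ 2) := by fun_prop
    simpa using (this.tendsto 0).mono_left nhdsWithin_le_nhds
  exact ge_of_tendsto hlim (eventually_mem_nhdsWithin.mono hperturb)

end HasSecondPartials

/-! ### Interior gradient estimates -/

section Barrier

variable {r A N x y : ℝ}

/-- The barrier of Gilbarg and Trudinger (Section 3.4) on the half square `[0, r] × [-r, r]`: it
has Laplacian `-N`, dominates `A` on the three outer sides, and vanishes at the origin with slope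
`2 * A / r + N * r / 2`. -/
noncomputable def gradientBarrier (r A N x y : ℝ) : ℝ :=
  A / r ^ 2 * (y ^ 2 + x * (2 * r - x)) + N / 2 * (x * (r - x))

lemma hasSecondPartials_gradientBarrier (r A N : ℝ) :
    HasSecondPartials (gradientBarrier r A N)
      (fun x _ => A / r ^ 2 * (2 * r - 2 * x) + N / 2 * (r - 2 * x))
      (fun _ y => A / r ^ 2 * (2 * y)) (fun _ _ => -(A / r ^ 2 * 2) - N)
      (fun _ _ => A / r ^ 2 * 2) := by
  have hsq : HasSecondPartials (fun _ y : ℝ => A / r ^ 2 * y ^ 2) (fun _ _ => 0)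
      (fun _ y => A / r ^ 2 * (2 * y)) (fun _ _ => 0) (fun _ _ => A / r ^ 2 * 2) :=
    (hasSecondPartials_fst
      (fun y => by simpa using (hasDerivAt_pow 2 y).const_mul (A / r ^ 2))
      (fun y => by simpa using ((hasDerivAt_id y).const_mul 2).const_mul (A / r ^ 2))).swap
  have hquad : HasSecondPartials
      (fun x _ : ℝ => A / r ^ 2 * (x * (2 * r - x)) + N / 2 * (x * (r - x)))
      (fun x _ => A / r ^ 2 * (2 * r - 2 * x) + N / 2 * (r - 2 * x)) (fun _ _ => 0)
      (fun _ _ => -(A / r ^ 2 * 2) - N) (fun _ _ => 0) := by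
    have hpar (s x : ℝ) : HasDerivAt (fun x => x * (s - x)) (s - 2 * x) x :=
      ((hasDerivAt_id x).mul ((hasDerivAt_id x).const_sub s)).congr_deriv (by simp; ring)
    have hlin (s x : ℝ) : HasDerivAt (fun x => s - 2 * x) (-2) x := by
      simpa using ((hasDerivAt_id x).const_mul 2).const_sub s
    exact hasSecondPartials_fst
      (fun x => ((hpar (2 * r) x).const_mul _).add ((hpar r x).const_mul _))
      fun x => (((hlin (2 * r) x).const_mul _).add ((hlin r x).const_mul _)).congr_deriv (by ring)
  simpa only [zero_add, add_zero, ← add_assoc, ← mul_add] using! hsq.add hquad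

lemma gradientBarrier_nonneg (hA : 0 ≤ A) (hN : 0 ≤ N) (hx : x ∈ Icc 0 r) :
    0 ≤ gradientBarrier r A N x y := by
  have h1 : 0 ≤ x * (r - x) := mul_nonneg hx.1 (sub_nonneg.2 hx.2)
  have h2 : 0 ≤ x * (2 * r - x) := mul_nonneg hx.1 (by linarith [hx.1, hx.2])
  unfold gradientBarrier
  positivity

lemma le_gradientBarrier (hr : 0 < r) (hA : 0 ≤ A) (hN : 0 ≤ N) (hx : x ∈ Icc 0 r)
    (h : x = r ∨ |y| = r) : A ≤ gradientBarrier r A N x y := by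
  have hmain : r ^ 2 ≤ y ^ 2 + x * (2 * r - x) := by
    rcases h with rfl | rfl
    · nlinarith [sq_nonneg y]
    · rw [sq_abs]
      exact le_add_of_nonneg_right (mul_nonneg hx.1 (by linarith [hx.1, hx.2]))
  calc A = A / r ^ 2 * r ^ 2 := by field_simp
    _ ≤ A / r ^ 2 * (y ^ 2 + x * (2 * r - x)) := by gcongr
    _ ≤ gradientBarrier r A N x y :=
      le_add_of_nonneg_right (mul_nonneg (by positivity)
        (mul_nonneg hx.1 (sub_nonneg.2 hx.2)))

end Barrier

namespace HasSecondPartials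

variable {r A N : ℝ}

lemma odd_part_le_gradientBarrier (hw : HasSecondPartials w wx wy wxx wyy) (hr : 0 < r)
    (hA : ∀ x y, |x| ≤ r → |y| ≤ r → |w x y| ≤ A)
    (hN : ∀ x y, |x| ≤ r → |y| ≤ r → |wxx x y + wyy x y| ≤ N) {x : ℝ} (hx : x ∈ Icc 0 r) :
    1 / 2 * (w x 0 - w (-x) 0) ≤ gradientBarrier r A N x 0 := by
  have hA0 : 0 ≤ A := (abs_nonneg _).trans (hA 0 0 (by simpa using hr.le) (by simpa using hr.le))
  have hN0 : 0 ≤ N := (abs_nonneg _).trans (hN 0 0 (by simpa using hr.le) (by simpa using hr.le))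
  have habs {q : ℝ × ℝ} (hq : q ∈ Icc 0 r ×ˢ Icc (-r) r) : |q.1| ≤ r ∧ |-q.1| ≤ r ∧ |q.2| ≤ r := by
    rw [abs_neg, abs_of_nonneg hq.1.1]
    exact ⟨hq.1.2, hq.1.2, abs_le.2 hq.2⟩
  refine sub_nonneg.1 <| ((hasSecondPartials_gradientBarrier r A N).sub
    ((hw.sub hw.comp_neg_fst).const_mul (1 / 2))).nonneg_of_laplacian_nonpos
    (K := Icc 0 r ×ˢ Icc (-r) r) (isCompact_Icc.prod isCompact_Icc) (fun q hq => ?_)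
    (fun q hq => ?_) (p := (x, 0)) ⟨hx, by simpa using hr.le⟩
  · obtain ⟨h1, h2, h3⟩ := habs (interior_subset hq)
    linarith [(abs_le.1 (hN q.1 q.2 h1 h3)).1, (abs_le.1 (hN (-q.1) q.2 h2 h3)).2]
  · rw [(isClosed_Icc.prod isClosed_Icc).frontier_eq, interior_prod_eq, interior_Icc,
      interior_Icc] at hq
    obtain ⟨hqK, hq⟩ := hq
    obtain ⟨h1, h2, h3⟩ := habs hqK
    rcases hqK.1.1.eq_or_lt with h0 | h0
    · simpa [← h0] using gradientBarrier_nonneg hA0 hN0 (y := q.2) hqK.1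
    · have hside : q.1 = r ∨ |q.2| = r := by
        by_contra! hne
        exact hq ⟨⟨h0, hqK.1.2.lt_of_ne hne.1⟩, abs_lt.1 (h3.lt_of_ne hne.2)⟩
      linarith [le_gradientBarrier hr hA0 hN0 hqK.1 hside, (abs_le.1 (hA q.1 q.2 h1 h3)).2,
        (abs_le.1 (hA (-q.1) q.2 h2 h3)).1]

lemma dx_zero_le (hw : HasSecondPartials w wx wy wxx wyy) (hr : 0 < r)
    (hA : ∀ x y, |x| ≤ r → |y| ≤ r → |w x y| ≤ A)
    (hN : ∀ x y, |x| ≤ r → |y| ≤ r → |wxx x y + wyy x y| ≤ N) :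
    wx 0 0 ≤ 2 * A / r + N * r / 2 := by
  have hgap : HasDerivAt (fun x => gradientBarrier r A N x 0 - 1 / 2 * (w x 0 - w (-x) 0))
      (2 * A / r + N * r / 2 - wx 0 0) 0 := by
    refine (((hasSecondPartials_gradientBarrier r A N).sub
      ((hw.sub hw.comp_neg_fst).const_mul (1 / 2))).dx 0 0).congr_deriv ?_
    simp only [neg_zero]
    field_simp
    ring
  -- the barrier and the odd part of `w` both vanish at the origin, so their slopes there compare
  refine sub_nonneg.1 (ge_of_tendsto hgap.tendsto_slope_zero_right ?_)
  filter_upwards [Ioo_mem_nhdsGT hr] with t ht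
  have := hw.odd_part_le_gradientBarrier hr hA hN (Ioo_subset_Icc_self ht)
  have hgap0 : gradientBarrier r A N 0 0 - 1 / 2 * (w 0 0 - w (-0) 0) = 0 := by
    simp [gradientBarrier]
  rw [hgap0, zero_add, sub_zero, smul_eq_mul]
  exact mul_nonneg (inv_nonneg.2 ht.1.le) (sub_nonneg.2 this)

lemma abs_dx_le (hw : HasSecondPartials w wx wy wxx wyy) {a b : ℝ} (hr : 0 < r)
    (hA : ∀ x ∈ closedBall a r, ∀ y ∈ closedBall b r, |w x y| ≤ A)
    (hN : ∀ x ∈ closedBall a r, ∀ y ∈ closedBall b r, |wxx x y + wyy x y| ≤ N) :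
    |wx a b| ≤ 2 * A / r + N * r / 2 := by
  have hmem {e t : ℝ} (ht : |t| ≤ r) : e + t ∈ closedBall e r := by simpa
  have hwab := hw.comp_const_add a b
  refine abs_le'.2 ⟨?_, ?_⟩
  · simpa using hwab.dx_zero_le hr (fun x y hx hy => hA _ (hmem hx) _ (hmem hy))
      fun x y hx hy => hN _ (hmem hx) _ (hmem hy)
  · simpa using hwab.comp_neg_fst.dx_zero_le hr
      (fun x y hx hy => hA _ (hmem (by rwa [abs_neg])) _ (hmem hy))
      fun x y hx hy => hN _ (hmem (by rwa [abs_neg])) _ (hmem hy)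

lemma abs_dy_le (hw : HasSecondPartials w wx wy wxx wyy) {a b : ℝ} (hr : 0 < r)
    (hA : ∀ x ∈ closedBall a r, ∀ y ∈ closedBall b r, |w x y| ≤ A)
    (hN : ∀ x ∈ closedBall a r, ∀ y ∈ closedBall b r, |wxx x y + wyy x y| ≤ N) :
    |wy a b| ≤ 2 * A / r + N * r / 2 :=
  hw.swap.abs_dx_le hr (fun y hy x hx => hA x hx y hy)
    fun y hy x hx => by simpa only [add_comm] using hN x hx y hy

end HasSecondPartials

lemma tendsto_closedBall_smallSets_atTop (r : ℝ) :
    Tendsto (fun y : ℝ => closedBall y r) atTop atTop.smallSets := by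
  simp only [Real.closedBall_eq_Icc]
  exact (tendsto_atTop_add_const_right _ (-r) tendsto_id).Icc
    (tendsto_atTop_add_const_right _ r tendsto_id)

lemma tendsto_closedBall_smallSets_atBot (r : ℝ) :
    Tendsto (fun y : ℝ => closedBall y r) atBot atBot.smallSets := by
  simp only [Real.closedBall_eq_Icc]
  exact (tendsto_atBot_add_const_right _ (-r) tendsto_id).Icc
    (tendsto_atBot_add_const_right _ r tendsto_id)

lemma abs_exp_mul_le_of_mem_closedBall {r b y s S : ℝ} (hy : y ∈ closedBall b 1) (hs : |s| ≤ S) :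
    |exp (r * (y - b)) * s| ≤ exp |r| * S := by
  rw [abs_mul, abs_exp]
  gcongr
  calc r * (y - b) ≤ |r| * |y - b| := (le_abs_self _).trans (abs_mul _ _).le
    _ ≤ |r| := mul_le_of_le_one_right (abs_nonneg r) hy

namespace HasSecondPartials

lemma exists_gradient_bound (d : ℝ) :
    ∃ k > 0, ∀ {w wx wy wxx wyy : ℝ → ℝ → ℝ}, HasSecondPartials w wx wy wxx wyy →
      ∀ {a b B : ℝ}, (∀ x ∈ closedBall a 1, ∀ y ∈ closedBall b 1,
        |w x y| ≤ B ∧ |wxx x y + wyy x y + d * wy x y| ≤ B) →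
      |wx a b| ≤ k * B ∧ |wy a b| ≤ k * B := by
  set E := exp |d / 2|
  refine ⟨2 * E + E * (1 + d ^ 2 / 4) / 2 + |d / 2|, by positivity, ?_⟩
  intro w wx wy wxx wyy hw a b B h
  have hB : |w a b| ≤ B := (h a (by simp) b (by simp)).1
  have hB0 : 0 ≤ B := (abs_nonneg _).trans hB
  -- conjugation by `exp (d * y / 2)` turns `Δ + d ∂ᵧ` into `Δ - d ^ 2 / 4`, which has no drift
  have hv := hw.exp_mul (d / 2) b
  have hvA : ∀ x ∈ closedBall a 1, ∀ y ∈ closedBall b 1, |exp (d / 2 * (y - b)) * w x y| ≤ E * B :=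
    fun x hx y hy => abs_exp_mul_le_of_mem_closedBall hy (h x hx y hy).1
  have hvN : ∀ x ∈ closedBall a 1, ∀ y ∈ closedBall b 1,
      |exp (d / 2 * (y - b)) * wxx x y + exp (d / 2 * (y - b)) *
        (wyy x y + 2 * (d / 2) * wy x y + (d / 2) ^ 2 * w x y)| ≤ E * (B + d ^ 2 / 4 * B) := by
    intro x hx y hy
    obtain ⟨hw0, hL⟩ := h x hx y hy
    have hsum : |wxx x y + wyy x y + d * wy x y + d ^ 2 / 4 * w x y| ≤ B + d ^ 2 / 4 * B := by
      refine (abs_add_le _ _).trans (add_le_add hL ?_)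
      rw [abs_mul, abs_of_nonneg (by positivity)]
      gcongr
    convert abs_exp_mul_le_of_mem_closedBall hy hsum using 2
    ring
  have hdx := hv.abs_dx_le one_pos hvA hvN
  have hdy := hv.abs_dy_le one_pos hvA hvN
  simp only [sub_self, mul_zero, exp_zero, one_mul] at hdx hdy
  have hdw : |d / 2 * w a b| ≤ |d / 2| * B := by
    rw [abs_mul]
    gcongr
  constructor
  · have : 0 ≤ |d / 2| * B := by positivity
    linarith
  · have := abs_sub (wy a b + d / 2 * w a b) (d / 2 * w a b)
    rw [add_sub_cancel_right] at this
    linarith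

lemma tendsto_partials_zero (hw : HasSecondPartials w wx wy wxx wyy) (d : ℝ) {l : Filter ℝ}
    (hl : Tendsto (fun y => closedBall y 1) l l.smallSets)
    (hlim : ∀ x, Tendsto (fun p : ℝ × ℝ => w p.1 p.2) (𝓝 x ×ˢ l) (𝓝 0))
    (hlimL : ∀ x, Tendsto (fun p : ℝ × ℝ => wxx p.1 p.2 + wyy p.1 p.2 + d * wy p.1 p.2)
      (𝓝 x ×ˢ l) (𝓝 0)) (a : ℝ) :
    Tendsto (wx a) l (𝓝 0) ∧ Tendsto (wy a) l (𝓝 0) := by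
  obtain ⟨k, hk, hgrad⟩ := exists_gradient_bound d
  have hsmall {ε : ℝ} (hε : 0 < ε) : ∀ᶠ y in l, |wx a y| ≤ ε ∧ |wy a y| ≤ ε := by
    have hB : 0 < ε / k := by positivity
    have hloc : ∀ᶠ p in 𝓝ˢ (closedBall a 1) ×ˢ l, |w p.1 p.2| ≤ ε / k ∧
        |wxx p.1 p.2 + wyy p.1 p.2 + d * wy p.1 p.2| ≤ ε / k := by
      refine (isCompact_closedBall a 1).mem_nhdsSet_prod_of_forall fun x _ => ?_
      have hball := closedBall_mem_nhds (0 : ℝ) hB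
      filter_upwards [hlim x hball, hlimL x hball] with p h1 h2
      exact ⟨by simpa using h1, by simpa using h2⟩
    obtain ⟨P, hP, Q, hQ, hPQ⟩ := eventually_prod_iff.1 hloc
    filter_upwards [hl.eventually hQ.smallSets] with y hy
    have := hgrad hw fun x hx y' hy' => hPQ (hP.self_of_nhdsSet x hx) (hy y' hy')
    rwa [mul_div_cancel₀ _ hk.ne'] at this
  constructor <;> refine (nhds_basis_closedBall.tendsto_right_iff).2 fun ε hε => ?_
  · simpa using (hsmall hε).mono fun _ h => h.1
  · simpa using (hsmall hε).mono fun _ h => h.2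

end HasSecondPartials

end SecondPartials

/-! ### Partial derivatives of functions of class `C¹` and `C²` -/

section PartialDerivatives

variable {u P Q : ℝ → ℝ → ℝ} {x y : ℝ}

lemma hasDerivAt_slice_fst (hu : DifferentiableAt ℝ (fun p : ℝ × ℝ => u p.1 p.2) (x, y)) :
    HasDerivAt (fun t => u t y) (fderiv ℝ (fun p : ℝ × ℝ => u p.1 p.2) (x, y) (1, 0)) x :=
  hu.hasFDerivAt.comp_hasDerivAt (f := fun t => (t, y)) x
    ((hasDerivAt_id x).prodMk (hasDerivAt_const x y))

lemma hasDerivAt_slice_snd (hu : DifferentiableAt ℝ (fun p : ℝ × ℝ => u p.1 p.2) (x, y)) :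
    HasDerivAt (fun t => u x t) (fderiv ℝ (fun p : ℝ × ℝ => u p.1 p.2) (x, y) (0, 1)) y :=
  hu.hasFDerivAt.comp_hasDerivAt (f := fun t => (x, t)) y
    ((hasDerivAt_const y x).prodMk (hasDerivAt_id y))

lemma pdx_eq_fderiv (hu : DifferentiableAt ℝ (fun p : ℝ × ℝ => u p.1 p.2) (x, y)) :
    pdx u x y = fderiv ℝ (fun p : ℝ × ℝ => u p.1 p.2) (x, y) (1, 0) :=
  (hasDerivAt_slice_fst hu).deriv

lemma pdy_eq_fderiv (hu : DifferentiableAt ℝ (fun p : ℝ × ℝ => u p.1 p.2) (x, y)) :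
    pdy u x y = fderiv ℝ (fun p : ℝ × ℝ => u p.1 p.2) (x, y) (0, 1) :=
  (hasDerivAt_slice_snd hu).deriv

lemma hasDerivAt_pdx (hu : DifferentiableAt ℝ (fun p : ℝ × ℝ => u p.1 p.2) (x, y)) :
    HasDerivAt (fun t => u t y) (pdx u x y) x :=
  (hasDerivAt_slice_fst hu).differentiableAt.hasDerivAt

lemma hasDerivAt_pdy (hu : DifferentiableAt ℝ (fun p : ℝ × ℝ => u p.1 p.2) (x, y)) :
    HasDerivAt (fun t => u x t) (pdy u x y) y :=
  (hasDerivAt_slice_snd hu).differentiableAt.hasDerivAt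

lemma contDiff_pdx {m n : WithTop ℕ∞} (hu : ContDiff ℝ n fun p : ℝ × ℝ => u p.1 p.2)
    (hmn : m + 1 ≤ n) : ContDiff ℝ m fun p : ℝ × ℝ => pdx u p.1 p.2 := by
  have hd := (hu.of_le (le_add_self.trans hmn)).differentiable one_ne_zero
  simp only [pdx_eq_fderiv (hd _)]
  exact (hu.fderiv_right hmn).clm_apply contDiff_const

lemma contDiff_pdy {m n : WithTop ℕ∞} (hu : ContDiff ℝ n fun p : ℝ × ℝ => u p.1 p.2)
    (hmn : m + 1 ≤ n) : ContDiff ℝ m fun p : ℝ × ℝ => pdy u p.1 p.2 := by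
  have hd := (hu.of_le (le_add_self.trans hmn)).differentiable one_ne_zero
  simp only [pdy_eq_fderiv (hd _)]
  exact (hu.fderiv_right hmn).clm_apply contDiff_const

lemma pdx_pdy_comm (hu : ContDiff ℝ 2 fun p : ℝ × ℝ => u p.1 p.2) (x y : ℝ) :
    pdx (pdy u) x y = pdy (pdx u) x y := by
  have hd := hu.differentiable two_ne_zero
  have hdd : Differentiable ℝ (fderiv ℝ fun p : ℝ × ℝ => u p.1 p.2) :=
    (hu.fderiv_right one_add_one_eq_two.le).differentiable one_ne_zero
  rw [pdx_eq_fderiv ((contDiff_pdy hu one_add_one_eq_two.le).differentiable one_ne_zero _),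
    pdy_eq_fderiv ((contDiff_pdx hu one_add_one_eq_two.le).differentiable one_ne_zero _)]
  simp only [pdx_eq_fderiv (hd _), pdy_eq_fderiv (hd _)]
  rw [fderiv_clm_apply (hdd _) (differentiableAt_const _),
    fderiv_clm_apply (hdd _) (differentiableAt_const _)]
  simpa using
    (hu.contDiffAt.isSymmSndFDerivAt (by simp) : IsSymmSndFDerivAt ℝ _ (x, y)) (1, 0) (0, 1)

lemma hasSecondPartials_of_contDiff (hu : ContDiff ℝ 2 fun p : ℝ × ℝ => u p.1 p.2) :
    HasSecondPartials u (pdx u) (pdy u) (pdxx u) (pdyy u) where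
  continuous := hu.continuous
  dx _ _ := hasDerivAt_pdx (hu.differentiable two_ne_zero _)
  dy _ _ := hasDerivAt_pdy (hu.differentiable two_ne_zero _)
  dxx _ _ := hasDerivAt_pdx
    ((contDiff_pdx hu one_add_one_eq_two.le).differentiable one_ne_zero _)
  dyy _ _ := hasDerivAt_pdy
    ((contDiff_pdy hu one_add_one_eq_two.le).differentiable one_ne_zero _)

lemma integral_pdx_add_pdy (hP : ContDiff ℝ 1 fun p : ℝ × ℝ => P p.1 p.2)
    (hQ : ContDiff ℝ 1 fun p : ℝ × ℝ => Q p.1 p.2) (a b p q : ℝ) :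
    ∫ x in a..b, ∫ y in p..q, (pdx P x y + pdy Q x y) =
      (((∫ x in a..b, Q x q) - ∫ x in a..b, Q x p) + ∫ y in p..q, P b y) - ∫ y in p..q, P a y := by
  have hdP := hP.differentiable one_ne_zero
  have hdQ := hQ.differentiable one_ne_zero
  simp only [pdx_eq_fderiv (hdP _), pdy_eq_fderiv (hdQ _)]
  refine integral2_divergence_prod_of_hasFDerivAt _ _ _ _ a p b q
    hP.continuous.continuousOn hQ.continuous.continuousOn
    (fun z _ => (hdP z).hasFDerivAt) (fun z _ => (hdQ z).hasFDerivAt) ?_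
  refine ContinuousOn.integrableOn_compact (isCompact_uIcc.prod isCompact_uIcc) ?_
  exact (((hP.continuous_fderiv one_ne_zero).clm_apply continuous_const).add
    ((hQ.continuous_fderiv one_ne_zero).clm_apply continuous_const)).continuousOn

end PartialDerivatives

/-! ### Stationary profiles -/

section Profile

/-- A stationary profile of `Δu + c uᵧ = F'(u)`: a global solution of `g'' = F'(g)`, viewed as a
solution which does not depend on `y`. -/
structure IsProfile (F g : ℝ → ℝ) : Prop where
  contDiff : ContDiff ℝ 2 g
  ode : ∀ t, deriv (deriv g) t = deriv F (g t)

/-- The first integral of `g'' = F'(g)`: minus the mechanical energy of a particle moving in the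
potential `-F`. -/
noncomputable def profileEnergy (F g : ℝ → ℝ) (t : ℝ) : ℝ := F (g t) - deriv g t ^ 2 / 2

namespace IsProfile

variable {F g : ℝ → ℝ} {m : ℝ}

lemma const (hm : deriv F m = 0) : IsProfile F fun _ => m :=
  ⟨contDiff_const, fun _ => by simp [hm]⟩

lemma comp_sub_const (hg : IsProfile F g) (s : ℝ) : IsProfile F fun t => g (t - s) where
  contDiff := hg.contDiff.comp (contDiff_id.sub contDiff_const)
  ode t := by
    have hderiv : deriv (fun t => g (t - s)) = fun t => deriv g (t - s) :=
      funext fun _ => deriv_comp_sub_const ..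
    rw [hderiv, deriv_comp_sub_const, hg.ode]

lemma hasDerivAt (hg : IsProfile F g) (t : ℝ) : HasDerivAt g (deriv g t) t :=
  (hg.contDiff.differentiable two_ne_zero t).hasDerivAt

lemma continuous_deriv (hg : IsProfile F g) : Continuous (deriv g) :=
  hg.contDiff.continuous_deriv one_le_two

lemma hasDerivAt_deriv (hg : IsProfile F g) (t : ℝ) :
    HasDerivAt (deriv g) (deriv F (g t)) t := by
  have hd : ContDiff ℝ 1 (deriv g) := (contDiff_succ_iff_deriv.1 hg.contDiff).2.2
  exact hg.ode t ▸ (hd.differentiable one_ne_zero t).hasDerivAt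

lemma continuous_profileEnergy (hg : IsProfile F g) (hF : Continuous F) :
    Continuous (profileEnergy F g) :=
  (hF.comp hg.contDiff.continuous).sub ((hg.continuous_deriv.pow 2).div_const 2)

lemma profileEnergy_eq (hg : IsProfile F g) (hF : Differentiable ℝ F) (s t : ℝ) :
    profileEnergy F g s = profileEnergy F g t := by
  have hd (x : ℝ) : HasDerivAt (profileEnergy F g) 0 x := by
    refine (((hF (g x)).hasDerivAt.comp x (hg.hasDerivAt x)).sub
      (((hg.hasDerivAt_deriv x).pow 2).div_const 2)).congr_deriv ?_
    push_cast
    ring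
  exact is_const_of_deriv_eq_zero (fun x => (hd x).differentiableAt) (fun x => (hd x).deriv) s t

lemma profileEnergy_eq_of_tendsto (hg : IsProfile F g) (hF : Differentiable ℝ F)
    (hlim : Tendsto g atTop (𝓝 m)) (t : ℝ) : profileEnergy F g t = F m := by
  have hmv (n : ℝ) : ∃ ξ ∈ Ioo n (n + 1), deriv g ξ = g (n + 1) - g n := by
    obtain ⟨ξ, hξ, h⟩ := exists_deriv_eq_slope g (lt_add_one n) hg.contDiff.continuous.continuousOn
      (hg.contDiff.differentiable two_ne_zero).differentiableOn
    exact ⟨ξ, hξ, by simpa using h⟩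
  choose ξ hξ hξd using hmv
  have hξtop : Tendsto ξ atTop atTop := tendsto_atTop_mono (fun n => (hξ n).1.le) tendsto_id
  have hslope : Tendsto (fun n => deriv g (ξ n)) atTop (𝓝 0) := by
    simp only [hξd]
    simpa using (hlim.comp (tendsto_atTop_add_const_right _ 1 tendsto_id)).sub hlim
  have henergy : Tendsto (fun n => profileEnergy F g (ξ n)) atTop (𝓝 (F m)) := by
    simpa [profileEnergy] using
      ((hF.continuous.tendsto m).comp (hlim.comp hξtop)).sub ((hslope.pow 2).div_const 2)
  exact tendsto_nhds_unique
    (tendsto_const_nhds.congr fun n => hg.profileEnergy_eq hF t (ξ n)) henergy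

end IsProfile

end Profile

/-! ### The flux identity and its limits -/

/-- A bounded `C²` solution of `Δu + c uᵧ = F'(u)` on the plane. -/
structure IsBoundedSolution (F : ℝ → ℝ) (c : ℝ) (u : ℝ → ℝ → ℝ) : Prop where
  contDiff : ContDiff ℝ 2 fun p : ℝ × ℝ => u p.1 p.2
  equation : ∀ x y, pdxx u x y + pdyy u x y + c * pdy u x y = deriv F (u x y)
  bounded : ∃ M, ∀ x y, |u x y| ≤ M

/-- A bounded solution which is nondecreasing in the direction `y` of propagation. -/
structure IsMonotoneSolution (F : ℝ → ℝ) (c : ℝ) (u : ℝ → ℝ → ℝ) : Prop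
    extends IsBoundedSolution F c u where
  pdy_nonneg : ∀ x y, 0 ≤ pdy u x y

/-- The `y`-component `(uᵧ² - uₓ²) / 2 - F(u)` of the stress tensor of `u`, whose integral over
horizontal lines is the Hamiltonian of the evolution in `y`; the `x`-component is `uₓ uᵧ`. -/
noncomputable def hamiltonianDensity (F : ℝ → ℝ) (u : ℝ → ℝ → ℝ) (x y : ℝ) : ℝ :=
  (pdy u x y ^ 2 - pdx u x y ^ 2) / 2 - F (u x y)

lemma IsSolution.isMonotoneSolution {F : ℝ → ℝ} {c : ℝ} {u : ℝ → ℝ → ℝ} (hu : IsSolution F c u) :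
    IsMonotoneSolution F c u where
  contDiff := hu.1.of_le (by norm_num)
  equation := hu.2.1
  bounded := ⟨1, hu.2.2.1⟩
  pdy_nonneg x y := (hu.2.2.2 x y).le

namespace IsBoundedSolution

variable {F g : ℝ → ℝ} {c : ℝ} {u : ℝ → ℝ → ℝ} {l : Filter ℝ}

lemma exists_abs_comp_le (hu : IsBoundedSolution F c u) {f : ℝ → ℝ} (hf : Continuous f) :
    ∃ M, ∀ x y, |f (u x y)| ≤ M := by
  obtain ⟨R, hR⟩ := hu.bounded
  obtain ⟨M, hM⟩ := (isCompact_Icc (a := -R) (b := R)).exists_bound_of_continuousOn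
    hf.continuousOn
  exact ⟨M, fun x y => hM _ (abs_le.1 (hR x y))⟩

lemma exists_gradient_bound (hu : IsBoundedSolution F c u) (hF : Continuous (deriv F)) :
    ∃ k, ∀ x y, |pdx u x y| ≤ k ∧ |pdy u x y| ≤ k := by
  obtain ⟨k, -, hgrad⟩ := HasSecondPartials.exists_gradient_bound c
  obtain ⟨R, hR⟩ := hu.bounded
  obtain ⟨M, hM⟩ := hu.exists_abs_comp_le hF
  refine ⟨k * max R M, fun x y => hgrad (hasSecondPartials_of_contDiff hu.contDiff)
    fun x _ y _ => ⟨(hR x y).trans (le_max_left R M), ?_⟩⟩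
  rw [hu.equation]
  exact (hM x y).trans (le_max_right R M)

lemma exists_abs_sub_le (hu : IsBoundedSolution F c u) (hF : Continuous (deriv F)) :
    ∃ k, ∀ x x' y, |u x' y - u x y| ≤ k * |x' - x| := by
  obtain ⟨k, hk⟩ := hu.exists_gradient_bound hF
  have hU := hasSecondPartials_of_contDiff hu.contDiff
  exact ⟨k, fun x x' y => convex_univ.norm_image_sub_le_of_norm_hasDerivWithin_le
    (fun t _ => (hU.dx t y).hasDerivWithinAt) (fun t _ => (hk t y).1) (mem_univ x) (mem_univ x')⟩

lemma tendsto_nhds_prod (hu : IsBoundedSolution F c u) (hF : Continuous (deriv F)) {x L : ℝ}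
    (hlim : Tendsto (u x) l (𝓝 L)) :
    Tendsto (fun p : ℝ × ℝ => u p.1 p.2) (𝓝 x ×ˢ l) (𝓝 L) := by
  obtain ⟨k, hk⟩ := hu.exists_abs_sub_le hF
  have hx : Tendsto (fun p : ℝ × ℝ => k * |p.1 - x|) (𝓝 x ×ˢ l) (𝓝 0) := by
    have : Continuous fun t => k * |t - x| := by fun_prop
    simpa [Function.comp_def] using (this.tendsto x).comp (tendsto_fst (g := l))
  have hdiff : Tendsto (fun p : ℝ × ℝ => u p.1 p.2 - u x p.2) (𝓝 x ×ˢ l) (𝓝 0) :=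
    squeeze_zero_norm (fun p => hk x p.1 p.2) hx
  simpa using hdiff.add (hlim.comp tendsto_snd)

lemma tendsto_gradient (hu : IsBoundedSolution F c u) (hF : Continuous (deriv F))
    (hg : IsProfile F g) (hl : Tendsto (fun y => closedBall y 1) l l.smallSets)
    (hlim : ∀ x, Tendsto (u x) l (𝓝 (g x))) (a : ℝ) :
    Tendsto (pdx u a) l (𝓝 (deriv g a)) ∧ Tendsto (pdy u a) l (𝓝 0) := by
  have hU := (hasSecondPartials_of_contDiff hu.contDiff).sub
    (hasSecondPartials_fst hg.hasDerivAt hg.hasDerivAt_deriv)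
  have hlim_comp {f : ℝ → ℝ} (hf : Continuous f) (x : ℝ) :
      Tendsto (fun p : ℝ × ℝ => f (u p.1 p.2) - f (g p.1)) (𝓝 x ×ˢ l) (𝓝 0) := by
    have hfu := (hf.tendsto (g x)).comp (hu.tendsto_nhds_prod hF (hlim x))
    have hfg := ((hf.comp hg.contDiff.continuous).tendsto x).comp (tendsto_fst (g := l))
    simpa using hfu.sub hfg
  have hgrad := hU.tendsto_partials_zero c hl (hlim_comp continuous_id) (fun x => by
    refine (hlim_comp hF x).congr fun p => ?_
    rw [← hu.equation]
    ring) a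
  exact ⟨tendsto_sub_nhds_zero_iff.1 hgrad.1, by simpa using hgrad.2⟩

lemma contDiff_hamiltonianDensity (hu : IsBoundedSolution F c u) (hF : ContDiff ℝ 1 F) :
    ContDiff ℝ 1 fun p : ℝ × ℝ => hamiltonianDensity F u p.1 p.2 :=
  ((((contDiff_pdy hu.contDiff one_add_one_eq_two.le).pow 2).sub
    ((contDiff_pdx hu.contDiff one_add_one_eq_two.le).pow 2)).div_const 2).sub
    (hF.comp (hu.contDiff.of_le one_le_two))

lemma pdx_mul_add_pdy_hamiltonianDensity (hu : IsBoundedSolution F c u) (hF : Differentiable ℝ F)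
    (x y : ℝ) :
    pdx (fun x y => pdx u x y * pdy u x y) x y + pdy (hamiltonianDensity F u) x y =
      -(c * pdy u x y ^ 2) := by
  have hU := hasSecondPartials_of_contDiff hu.contDiff
  have hyx := hasDerivAt_pdx (x := x) (y := y)
    ((contDiff_pdy hu.contDiff one_add_one_eq_two.le).differentiable one_ne_zero _)
  have hxy := hasDerivAt_pdy (x := x) (y := y)
    ((contDiff_pdx hu.contDiff one_add_one_eq_two.le).differentiable one_ne_zero _)
  have hflux : pdx (fun x y => pdx u x y * pdy u x y) x y =
      pdxx u x y * pdy u x y + pdx u x y * pdx (pdy u) x y := ((hU.dxx x y).mul hyx).deriv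
  have hham : pdy (hamiltonianDensity F u) x y =
      pdy u x y * pdyy u x y - pdx u x y * pdy (pdx u) x y - deriv F (u x y) * pdy u x y := by
    refine (((((hU.dyy x y).pow 2).sub (hxy.pow 2)).div_const 2).sub
      ((hF (u x y)).hasDerivAt.comp y (hU.dy x y))).deriv.trans ?_
    push_cast
    ring
  rw [hflux, hham, pdx_pdy_comm hu.contDiff, ← hu.equation]
  ring

lemma exists_abs_hamiltonianDensity_le (hu : IsBoundedSolution F c u) (hF : ContDiff ℝ 1 F) :
    ∃ M, ∀ x y, |hamiltonianDensity F u x y| ≤ M := by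
  obtain ⟨k, hk⟩ := hu.exists_gradient_bound (hF.continuous_deriv le_rfl)
  obtain ⟨M, hM⟩ := hu.exists_abs_comp_le hF.continuous
  refine ⟨k ^ 2 / 2 + M, fun x y => (abs_sub _ _).trans (add_le_add ?_ (hM x y))⟩
  have hx : pdx u x y ^ 2 ≤ k ^ 2 := sq_le_sq.2 ((hk x y).1.trans (le_abs_self k))
  have hy : pdy u x y ^ 2 ≤ k ^ 2 := sq_le_sq.2 ((hk x y).2.trans (le_abs_self k))
  rw [abs_le]
  constructor <;> linarith [sq_nonneg (pdx u x y), sq_nonneg (pdy u x y)]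

lemma tendsto_integral_hamiltonianDensity (hu : IsBoundedSolution F c u) (hF : ContDiff ℝ 1 F)
    (hg : IsProfile F g) [l.IsCountablyGenerated]
    (hl : Tendsto (fun y => closedBall y 1) l l.smallSets)
    (hlim : ∀ x, Tendsto (u x) l (𝓝 (g x))) (a b : ℝ) :
    Tendsto (fun y => ∫ x in a..b, hamiltonianDensity F u x y) l
      (𝓝 (-∫ x in a..b, (profileEnergy F g x + deriv g x ^ 2))) := by
  obtain ⟨M, hM⟩ := hu.exists_abs_hamiltonianDensity_le hF
  have hpoint (x : ℝ) : Tendsto (hamiltonianDensity F u x) l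
      (𝓝 (-(profileEnergy F g x + deriv g x ^ 2))) := by
    obtain ⟨hx, hy⟩ := hu.tendsto_gradient (hF.continuous_deriv le_rfl) hg hl hlim x
    have henergy : -(profileEnergy F g x + deriv g x ^ 2) =
        (0 ^ 2 - deriv g x ^ 2) / 2 - F (g x) := by
      rw [profileEnergy]
      ring
    rw [henergy]
    exact (((hy.pow 2).sub (hx.pow 2)).div_const 2).sub
      ((hF.continuous.tendsto (g x)).comp (hlim x))
  rw [← intervalIntegral.integral_neg]
  exact intervalIntegral.tendsto_integral_filter_of_dominated_convergence (fun _ => M)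
    (Eventually.of_forall fun y => ((hu.contDiff_hamiltonianDensity hF).continuous.comp
      (continuous_id.prodMk continuous_const)).aestronglyMeasurable)
    (Eventually.of_forall fun y => Eventually.of_forall fun x _ => hM x y)
    intervalIntegrable_const (Eventually.of_forall fun x _ => hpoint x)

end IsBoundedSolution

namespace IsMonotoneSolution

variable {F g : ℝ → ℝ} {c m k p q a b : ℝ} {u : ℝ → ℝ → ℝ}

lemma abs_integral_pdx_mul_pdy_le (hu : IsMonotoneSolution F c u) {x : ℝ}
    (hk : ∀ y, |pdx u x y| ≤ k) (hpq : p ≤ q) :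
    |∫ y in p..q, pdx u x y * pdy u x y| ≤ k * (u x q - u x p) := by
  have hcont : Continuous (pdy u x) :=
    (contDiff_pdy hu.contDiff one_add_one_eq_two.le).continuous.comp
      (continuous_const.prodMk continuous_id)
  have hftc : ∫ y in p..q, pdy u x y = u x q - u x p :=
    intervalIntegral.integral_eq_sub_of_hasDerivAt
      (fun y _ => (hasSecondPartials_of_contDiff hu.contDiff).dy x y)
      (hcont.intervalIntegrable _ _)
  have hint : IntervalIntegrable (fun y => k * pdy u x y) volume p q :=
    (hcont.const_mul k).intervalIntegrable _ _
  rw [← hftc, ← intervalIntegral.integral_const_mul, ← norm_eq_abs]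
  refine intervalIntegral.norm_integral_le_of_norm_le hpq (Eventually.of_forall fun y _ => ?_) hint
  rw [norm_mul, norm_of_nonneg (hu.pdy_nonneg x y)]
  exact mul_le_mul_of_nonneg_right (hk y) (hu.pdy_nonneg x y)

lemma integral_hamiltonianDensity_sub_le (hu : IsMonotoneSolution F c u) (hF : ContDiff ℝ 1 F)
    (hc : 0 ≤ c) (hk : ∀ x y, |pdx u x y| ≤ k) (hab : a ≤ b) (hpq : p ≤ q) :
    (∫ x in a..b, hamiltonianDensity F u x q) - (∫ x in a..b, hamiltonianDensity F u x p) ≤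
      k * ((u a q - u a p) + (u b q - u b p)) := by
  have hflux : ContDiff ℝ 1 fun p : ℝ × ℝ => pdx u p.1 p.2 * pdy u p.1 p.2 :=
    (contDiff_pdx hu.contDiff one_add_one_eq_two.le).mul
      (contDiff_pdy hu.contDiff one_add_one_eq_two.le)
  have hdiv := integral_pdx_add_pdy (P := fun x y => pdx u x y * pdy u x y) hflux
    (hu.contDiff_hamiltonianDensity hF) a b p q
  simp only [hu.pdx_mul_add_pdy_hamiltonianDensity (hF.differentiable one_ne_zero),
    intervalIntegral.integral_neg] at hdiv
  have hdissip : 0 ≤ ∫ x in a..b, ∫ y in p..q, c * pdy u x y ^ 2 :=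
    intervalIntegral.integral_nonneg hab fun x _ =>
      intervalIntegral.integral_nonneg hpq fun y _ => mul_nonneg hc (sq_nonneg _)
  have ha := (abs_le.1 (hu.abs_integral_pdx_mul_pdy_le (hk a) hpq)).2
  have hb := (abs_le.1 (hu.abs_integral_pdx_mul_pdy_le (hk b) hpq)).1
  linarith

lemma exists_integral_profileEnergy_le (hu : IsMonotoneSolution F c u) (hF : ContDiff ℝ 1 F)
    (hc : 0 ≤ c) (hm : deriv F m = 0) (hg : IsProfile F g) (htop : ∀ x, Tendsto (u x) atTop (𝓝 m))
    (hbot : ∀ x, Tendsto (u x) atBot (𝓝 (g x))) :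
    ∃ k, 0 ≤ k ∧ ∀ a b, a ≤ b →
      ∫ x in a..b, (profileEnergy F g x - F m + deriv g x ^ 2) ≤ k * ((m - g a) + (m - g b)) := by
  obtain ⟨k, hk⟩ := hu.exists_gradient_bound (hF.continuous_deriv le_rfl)
  refine ⟨k, (abs_nonneg _).trans (hk 0 0).1, fun a b hab => ?_⟩
  have hHtop := hu.tendsto_integral_hamiltonianDensity hF (IsProfile.const hm)
    (tendsto_closedBall_smallSets_atTop 1) htop a b
  have hHbot := (hu.tendsto_integral_hamiltonianDensity hF hg
    (tendsto_closedBall_smallSets_atBot 1) hbot a b).comp tendsto_neg_atTop_atBot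
  have hrise (x : ℝ) : Tendsto (fun n => u x n - u x (-n)) atTop (𝓝 (m - g x)) :=
    (htop x).sub ((hbot x).comp tendsto_neg_atTop_atBot)
  have hlim := le_of_tendsto_of_tendsto (hHtop.sub hHbot)
    (((hrise a).add (hrise b)).const_mul k) <| (eventually_ge_atTop 0).mono fun n hn =>
      hu.integral_hamiltonianDensity_sub_le hF hc (fun x y => (hk x y).1) hab (neg_le_self hn)
  have hint : IntervalIntegrable (fun x => profileEnergy F g x + deriv g x ^ 2) volume a b :=
    (hg.continuous_profileEnergy hF.continuous |>.add
      (hg.continuous_deriv.pow 2)).intervalIntegrable _ _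
  calc ∫ x in a..b, (profileEnergy F g x - F m + deriv g x ^ 2)
      = (∫ x in a..b, (profileEnergy F g x + deriv g x ^ 2)) - ∫ _ in a..b, F m := by
        rw [← intervalIntegral.integral_sub hint intervalIntegrable_const]
        congr 1 with x
        ring
    _ ≤ k * ((m - g a) + (m - g b)) := by
      simpa [profileEnergy, add_comm, sub_eq_add_neg] using hlim

lemma profileEnergy_le (hu : IsMonotoneSolution F c u) (hF : ContDiff ℝ 1 F) (hc : 0 ≤ c)
    (hm : deriv F m = 0) (hg : IsProfile F g) (htop : ∀ x, Tendsto (u x) atTop (𝓝 m))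
    (hbot : ∀ x, Tendsto (u x) atBot (𝓝 (g x))) (t : ℝ) :
    profileEnergy F g t ≤ F m := by
  obtain ⟨k, hk, hexcess⟩ := hu.exists_integral_profileEnergy_le hF hc hm hg htop hbot
  obtain ⟨M, hM⟩ := hu.bounded
  have hgM (x : ℝ) : -M ≤ g x :=
    ge_of_tendsto (hbot x) (Eventually.of_forall fun y => (abs_le.1 (hM x y)).1)
  have hlinear (L : ℝ) (hL : 0 ≤ L) :
      (profileEnergy F g t - F m) * L ≤ k * ((m + M) + (m + M)) := by
    calc (profileEnergy F g t - F m) * L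
        = ∫ _ in 0..L, (profileEnergy F g t - F m) := by
          rw [intervalIntegral.integral_const, sub_zero, smul_eq_mul, mul_comm]
      _ ≤ ∫ x in 0..L, (profileEnergy F g x - F m + deriv g x ^ 2) := by
        refine intervalIntegral.integral_mono_on hL intervalIntegrable_const
          (((hg.continuous_profileEnergy hF.continuous).sub continuous_const |>.add
            (hg.continuous_deriv.pow 2)).intervalIntegrable _ _) fun x _ => ?_
        rw [hg.profileEnergy_eq (hF.differentiable one_ne_zero) t x]
        exact le_add_of_nonneg_right (sq_nonneg _)
      _ ≤ k * ((m - g 0) + (m - g L)) := hexcess 0 L hL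
      _ ≤ k * ((m + M) + (m + M)) := by gcongr <;> linarith [hgM 0, hgM L]
  by_contra! hlt
  have hgrow := (tendsto_id.const_mul_atTop (sub_pos.2 hlt)).eventually_gt_atTop
    (k * ((m + M) + (m + M)))
  obtain ⟨L, hL, hL0⟩ := (hgrow.and (eventually_ge_atTop 0)).exists
  exact hL.not_ge (hlinear L hL0)

lemma deriv_eq_zero_of_homoclinic (hu : IsMonotoneSolution F c u) (hF : ContDiff ℝ 1 F)
    (hc : 0 ≤ c) (hm : deriv F m = 0) (hg : IsProfile F g)
    (htop : ∀ x, Tendsto (u x) atTop (𝓝 m)) (hbot : ∀ x, Tendsto (u x) atBot (𝓝 (g x)))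
    (hgtop : Tendsto g atTop (𝓝 m)) (hgbot : Tendsto g atBot (𝓝 m)) (t : ℝ) :
    deriv g t = 0 := by
  obtain ⟨k, -, hexcess⟩ := hu.exists_integral_profileEnergy_le hF hc hm hg htop hbot
  simp only [hg.profileEnergy_eq_of_tendsto (hF.differentiable one_ne_zero) hgtop, sub_self,
    zero_add] at hexcess
  have hlim : Tendsto (fun n => k * ((m - g (-n)) + (m - g n))) atTop (𝓝 0) := by
    simpa using (((hgbot.comp tendsto_neg_atTop_atBot).const_sub m).add
      (hgtop.const_sub m)).const_mul k
  have hcont : Continuous fun x => deriv g x ^ 2 := hg.continuous_deriv.pow 2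
  by_contra hne
  have hpos : 0 < ∫ x in (t - 1)..(t + 1), deriv g x ^ 2 :=
    intervalIntegral.integral_pos (by linarith) hcont.continuousOn (fun x _ => sq_nonneg _)
      ⟨t, ⟨by linarith, by linarith⟩, by positivity⟩
  refine absurd (ge_of_tendsto hlim ?_) hpos.not_ge
  filter_upwards [eventually_ge_atTop (|t| + 1)] with n hn
  obtain ⟨hn1, hn2⟩ := abs_le.1 (le_sub_iff_add_le.2 hn)
  calc ∫ x in (t - 1)..(t + 1), deriv g x ^ 2
      ≤ ∫ x in (-n)..n, deriv g x ^ 2 :=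
        intervalIntegral.integral_mono_interval (by linarith) (by linarith) (by linarith)
          (Eventually.of_forall fun x => sq_nonneg _) (hcont.intervalIntegrable _ _)
    _ ≤ k * ((m - g (-n)) + (m - g n)) := hexcess (-n) n (by linarith [abs_nonneg t])

lemma eq_of_homoclinic (hu : IsMonotoneSolution F c u) (hF : ContDiff ℝ 1 F)
    (hc : 0 ≤ c) (hm : deriv F m = 0) (hg : IsProfile F g)
    (htop : ∀ x, Tendsto (u x) atTop (𝓝 m)) (hbot : ∀ x, Tendsto (u x) atBot (𝓝 (g x)))
    (hgtop : Tendsto g atTop (𝓝 m)) (hgbot : Tendsto g atBot (𝓝 m)) (t : ℝ) : g t = m := by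
  have hconst (s : ℝ) : g t = g s :=
    is_const_of_deriv_eq_zero (hg.contDiff.differentiable two_ne_zero)
      (hu.deriv_eq_zero_of_homoclinic hF hc hm hg htop hbot hgtop hgbot) t s
  exact tendsto_nhds_unique (tendsto_const_nhds.congr hconst) hgtop

end IsMonotoneSolution

lemma DoubleWell.apply_one_lt {F : ℝ → ℝ} (hF : DoubleWell F) {α : ℝ} (h0 : 0 ≤ α) (h1 : α < 1) :
    F 1 < F α := by
  have hanti : StrictAntiOn F (Icc 0 1) :=
    strictAntiOn_of_deriv_neg (convex_Icc 0 1) hF.1.continuous.continuousOn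
      (by simpa only [interior_Icc] using hF.2.2.2.2.2.2.1)
  exact hanti ⟨h0, h1.le⟩ (right_mem_Icc.2 zero_le_one) h1

theorem no_wave_from_unstable_profile_to_one_general {F g : ℝ → ℝ} {c m : ℝ} (hF : ContDiff ℝ 1 F)
    (hc : 0 ≤ c) (hm : deriv F m = 0) (hg : IsProfile F g)
    (h : (∃ t, F m < profileEnergy F g t) ∨
      Tendsto g atTop (𝓝 m) ∧ Tendsto g atBot (𝓝 m) ∧ ∃ t, g t ≠ m) :
    ¬ ∃ u : ℝ → ℝ → ℝ, IsMonotoneSolution F c u ∧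
      (∀ x, Tendsto (u x) atTop (𝓝 m)) ∧ ∀ x, Tendsto (u x) atBot (𝓝 (g x)) := by
  rintro ⟨u, hu, htop, hbot⟩
  obtain ⟨t, ht⟩ | ⟨hgtop, hgbot, t, ht⟩ := h
  · exact ht.not_ge (hu.profileEnergy_le hF hc hm hg htop hbot t)
  · exact ht (hu.eq_of_homoclinic hF hc hm hg htop hbot hgtop hgbot t)

/-- Nonexistence of monotone traveling waves going from a periodic profile
`g_α` (or the ground state profile `g_*` in the unbalanced case) at `y = -∞`
up to `1` at `y = +∞` (Theorem 4.2). -/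
theorem no_wave_from_unstable_profile_to_one
    (F : ℝ → ℝ) (hF : DoubleWell F) (c : ℝ) (hc : 0 < c) :
    (∀ α : ℝ, 0 ≤ α → α < 1 →
      ∀ gα : ℝ → ℝ, ContDiff ℝ 2 gα →
        (∀ t : ℝ, deriv (deriv gα) t = deriv F (gα t)) →
        gα 0 = α → deriv gα 0 = 0 →
        ∀ K : ℝ, ¬ ∃ u : ℝ → ℝ → ℝ, IsSolution F c u ∧
          (∀ x : ℝ, Tendsto (fun y => u x y) atTop (nhds 1)) ∧
          (∀ x : ℝ, Tendsto (fun y => u x y) atBot (nhds (gα (x - K))))) ∧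
    (0 < F 1 →
      ∀ gs : ℝ → ℝ, ContDiff ℝ 2 gs →
        (∀ t : ℝ, deriv (deriv gs) t = deriv F (gs t)) →
        (∀ t : ℝ, |gs t| < 1) → deriv gs 0 = 0 →
        Tendsto gs atTop (nhds 1) → Tendsto gs atBot (nhds 1) →
        ∀ K : ℝ, ¬ ∃ u : ℝ → ℝ → ℝ, IsSolution F c u ∧
          (∀ x : ℝ, Tendsto (fun y => u x y) atTop (nhds 1)) ∧
          (∀ x : ℝ, Tendsto (fun y => u x y) atBot (nhds (gs (x - K))))) := by
  have hF1 : ContDiff ℝ 1 F := hF.1.of_le (by norm_num)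
  refine ⟨fun α hα0 hα1 g hg hode hg0 hg0' K ⟨u, hu, hlim⟩ => ?_,
    fun _ g hg hode hg1 _ hgtop hgbot K ⟨u, hu, hlim⟩ => ?_⟩
  all_goals
    have hgK : IsProfile F fun x => g (x - K) := IsProfile.comp_sub_const ⟨hg, hode⟩ K
    refine no_wave_from_unstable_profile_to_one_general hF1 hc.le hF.2.2.1 hgK ?_
      ⟨u, hu.isMonotoneSolution, hlim⟩
  · refine .inl ⟨K, ?_⟩
    simpa [profileEnergy, deriv_comp_sub_const, hg0, hg0'] using hF.apply_one_lt hα0 hα1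
  · exact .inr ⟨hgtop.comp (tendsto_atTop_add_const_right _ (-K) tendsto_id),
      hgbot.comp (tendsto_atBot_add_const_right _ (-K) tendsto_id),
      0, ((le_abs_self _).trans_lt (hg1 _)).ne⟩
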